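/- Let n ≥ 2 be an integer, σ ∈ ℝ, and let t₁,…,t_n be real numbers with ∑_{μ=1}^n t_μ = 0 and max_μ |t_μ| ≤ 1/n. Set θ_μ = 2πμ/n + σ + t_μ. Then ∑_{μ≠ν} log|e^{iθ_μ} − e^{iθ_ν}| ≥ n log n − (4/3)(n − 1/n), where the sum is over all ordered pairs 1 ≤ μ ≠ ν ≤ n. -/

import Mathlib

/-!
Write `x = π(μ - ν)/n` and `s = (t_μ - t_ν)/2`, so that `|e^{iθ_μ} - e^{iθ_ν}| = 2|sin(x + s)|`.
For `μ ≠ ν` one has `|sin x| ≥ 2/n ≥ 2|s|`, and then a second-order estimate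
(`log_two_sin_add_ge`) gives
`log|2 sin(x + s)| ≥ log|2 sin x| + s cot x - 4 s² / sin² x`.
Summing over all pairs:

* the zeroth-order terms give the energy `n log n` of the roots of unity (`sum_log_two_sin`);
* the first-order terms cancel, because `k ↦ cot(πk/n)` is odd and `n`-periodic;
* since `s² ≤ 1/n²`, the second-order terms cost at most
  `(4/n²) · n · ∑_{k=1}^{n-1} 1/sin²(πk/n) = (4/3)(n - 1/n)`, by the classical evaluation
  `∑_{k=1}^{n-1} 1/sin²(πk/n) = (n² - 1)/3` (`sum_inv_sin_sq`), proved here by Parseval's identity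
  on `ℤ/n` for the function `j ↦ j`.

All sums are extended to the diagonal `μ = ν`: with Lean's conventions `log 0 = 0` and `1/0 = 0`,
each summand vanishes there.
-/

open Finset

/-! ### The second-order estimate -/

lemma abs_sin_sub_self_le {s : ℝ} (hs : |s| ≤ 1) : |Real.sin s - s| ≤ s ^ 2 / 2 := by
  have key : ∀ u : ℝ, 0 ≤ u → u ≤ 1 → |Real.sin u - u| ≤ u ^ 2 / 2 := by
    intro u hu hu1
    rcases hu.eq_or_lt with rfl | hu
    · simp
    have h1 := Real.sin_gt_sub_cube hu
    have h2 := Real.sin_le hu.le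
    rw [abs_le]
    constructor <;> nlinarith [mul_nonneg (sq_nonneg u) (sub_nonneg.2 hu1)]
  rcases le_total 0 s with h | h
  · exact key s h (by rwa [abs_of_nonneg h] at hs)
  · have := key (-s) (by linarith) (by rwa [abs_of_nonpos h] at hs)
    rw [Real.sin_neg, neg_sq, ← abs_neg] at this
    convert this using 2
    ring

/-- With `1 + w = sin (x + s) / sin x`, this combines `log (1 + w) ≥ w - 2 w²` with
`|w| ≤ |s| / |sin x| ≤ 1 / 2` and `w ≥ s cot x - s² / sin² x`. -/
lemma log_two_sin_add_ge {x s : ℝ} (hx : Real.sin x ≠ 0) (hs : |s| ≤ |Real.sin x| / 2) :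
    Real.log |2 * Real.sin x| + s * Real.cot x - 4 * s ^ 2 * (1 / Real.sin x ^ 2) ≤
      Real.log |2 * Real.sin (x + s)| := by
  have hxp : 0 < |Real.sin x| := abs_pos.2 hx
  have hx1 : |Real.sin x| ≤ 1 := Real.abs_sin_le_one x
  have hx2 : 0 < Real.sin x ^ 2 := by positivity
  obtain ⟨w, hw⟩ : ∃ w, w = Real.sin (x + s) / Real.sin x - 1 := ⟨_, rfl⟩
  have hsin : Real.sin (x + s) = (1 + w) * Real.sin x := by rw [hw]; field_simp; ring
  have hwabs : |w| ≤ |s| / |Real.sin x| := by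
    have h1 : w = (Real.sin (x + s) - Real.sin x) / Real.sin x := by rw [hw]; field_simp
    rw [h1, abs_div]
    refine div_le_div_of_nonneg_right ?_ hxp.le
    simpa using Real.abs_sin_sub_sin_le (x + s) x
  have hwhalf : |w| ≤ 1 / 2 := by
    refine hwabs.trans ?_
    rw [div_le_iff₀ hxp]; linarith
  have hwsq : w ^ 2 ≤ s ^ 2 * (1 / Real.sin x ^ 2) := by
    have := pow_le_pow_left₀ (abs_nonneg w) hwabs 2
    rw [div_pow, sq_abs, sq_abs, sq_abs] at this
    rw [mul_one_div]; exact this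
  have hw1 : 0 < 1 + w := by linarith [(abs_le.1 hwhalf).1]
  have hlog : w - 2 * w ^ 2 ≤ Real.log (1 + w) := by
    refine le_trans ?_ (Real.one_sub_inv_le_log_of_pos hw1)
    have : 1 - (1 + w)⁻¹ = w / (1 + w) := by field_simp; ring
    rw [this, le_div_iff₀ hw1]
    have h2 : 0 ≤ 1 + 2 * w := by linarith [(abs_le.1 hwhalf).1]
    nlinarith [mul_nonneg (sq_nonneg w) h2]
  have hwlow : s * Real.cot x - s ^ 2 * (1 / Real.sin x ^ 2) ≤ w := by
    have e : w = Real.cos s - 1 + Real.cot x * (Real.sin s - s) + s * Real.cot x := by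
      rw [hw, Real.sin_add, Real.cot_eq_cos_div_sin]; field_simp; ring
    have hc : 1 - s ^ 2 / 2 ≤ Real.cos s := Real.one_sub_sq_div_two_le_cos
    have hone : 1 ≤ 1 / Real.sin x ^ 2 := by
      rw [le_div_iff₀ hx2, one_mul]; exact Real.sin_sq_le_one x
    have hcot : |Real.cot x| ≤ 1 / Real.sin x ^ 2 := by
      rw [Real.cot_eq_cos_div_sin, abs_div, div_le_div_iff₀ hxp hx2, ← sq_abs (Real.sin x)]
      have := Real.abs_cos_le_one x
      have h3 : |Real.cos x| * |Real.sin x| ≤ 1 := by nlinarith [abs_nonneg (Real.cos x)]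
      nlinarith
    have hprod : |Real.cot x * (Real.sin s - s)| ≤ 1 / Real.sin x ^ 2 * (s ^ 2 / 2) := by
      rw [abs_mul]
      exact mul_le_mul hcot (abs_sin_sub_self_le (by linarith)) (abs_nonneg _) (by positivity)
    have := (abs_le.1 hprod).1
    nlinarith [mul_le_mul_of_nonneg_left hone (sq_nonneg s)]
  have hfac : Real.log |2 * Real.sin (x + s)| = Real.log |2 * Real.sin x| + Real.log (1 + w) := by
    rw [hsin, show 2 * ((1 + w) * Real.sin x) = (2 * Real.sin x) * (1 + w) by ring, abs_mul,
      abs_of_pos hw1, Real.log_mul (by positivity) hw1.ne']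
  rw [hfac]
  have : 0 ≤ s ^ 2 * (1 / Real.sin x ^ 2) := by positivity
  linarith

/-- On `(0, π)` the sine dominates `2/π` times the distance to the endpoints. -/
lemma two_div_le_sin (n k : ℕ) (hk : 0 < k) (hkn : k < n) :
    2 / (n : ℝ) ≤ Real.sin (Real.pi * k / n) := by
  have hn : (0 : ℝ) < n := by exact_mod_cast hk.trans hkn
  have hk1 : (1 : ℝ) ≤ k := by exact_mod_cast hk
  have hkn1 : (k : ℝ) + 1 ≤ n := by exact_mod_cast hkn
  have hpi := Real.pi_pos
  rcases le_total (2 * (k : ℝ)) n with h | h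
  · have := Real.mul_le_sin (x := Real.pi * k / n) (by positivity)
      (by rw [div_le_div_iff₀ hn two_pos]; nlinarith)
    refine le_trans ?_ this
    rw [show 2 / Real.pi * (Real.pi * k / n) = 2 * k / n by field_simp]
    gcongr; linarith
  · have e : Real.pi * k / n = Real.pi - Real.pi * (n - k) / n := by field_simp; ring
    rw [e, Real.sin_pi_sub]
    have h0 : 0 ≤ (n : ℝ) - k := by linarith
    have := Real.mul_le_sin (x := Real.pi * (n - k) / n) (by positivity)
      (by rw [div_le_div_iff₀ hn two_pos]; nlinarith)
    refine le_trans ?_ this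
    rw [show 2 / Real.pi * (Real.pi * (n - k) / n) = 2 * (n - k) / n by field_simp]
    gcongr; linarith

/-! ### Sums over the roots of unity -/

lemma norm_zeta_pow_sub_one (n k : ℕ) :
    ‖Complex.exp (2 * Real.pi * Complex.I / n) ^ k - 1‖ = |2 * Real.sin (Real.pi * k / n)| := by
  rw [← Complex.exp_nat_mul]
  have := Complex.norm_exp_I_mul_ofReal_sub_one (2 * (Real.pi * k / n))
  rw [Real.norm_eq_abs, mul_div_cancel_left₀ _ (two_ne_zero' ℝ)] at this
  rw [← this]
  congr 3
  push_cast
  ring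

lemma sum_log_two_sin (n : ℕ) (hn : 0 < n) :
    ∑ k ∈ range n, Real.log |2 * Real.sin (Real.pi * k / n)| = Real.log n := by
  obtain ⟨m, rfl⟩ : ∃ m, n = m + 1 := ⟨n - 1, by omega⟩
  have hζ := Complex.isPrimitiveRoot_exp (m + 1) m.succ_ne_zero
  have hprod := congrArg norm hζ.prod_one_sub_pow_eq_order
  rw [norm_prod] at hprod
  have hterm : ∀ k ∈ range m,
      ‖1 - Complex.exp (2 * Real.pi * Complex.I / (m + 1 : ℕ)) ^ (k + 1)‖ =
        |2 * Real.sin (Real.pi * (k + 1 : ℕ) / (m + 1 : ℕ))| := by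
    intro k _
    rw [norm_sub_rev, norm_zeta_pow_sub_one]
  rw [prod_congr rfl hterm] at hprod
  rw [sum_range_succ', ← Real.log_prod, hprod]
  · have : ‖(m : ℂ) + 1‖ = ((m + 1 : ℕ) : ℝ) := by
      rw [← Nat.cast_succ, Complex.norm_natCast]
    rw [this]; simp
  · intro k hk
    have := two_div_le_sin (m + 1) (k + 1) k.succ_pos (by have := mem_range.1 hk; omega)
    have h2 : (0 : ℝ) < 2 / (m + 1 : ℕ) := by positivity
    have : 0 < Real.sin (Real.pi * (k + 1 : ℕ) / (m + 1 : ℕ)) := h2.trans_le this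
    positivity

/-- Summation by parts for `∑ j ω^j`. -/
lemma sum_mul_pow_mul_sub_one (ω : ℂ) (m : ℕ) :
    (∑ j ∈ range m, (j : ℂ) * ω ^ j) * (ω - 1) = m * ω ^ m - ω * ∑ j ∈ range m, ω ^ j := by
  induction m with
  | zero => simp
  | succ m ih => rw [sum_range_succ, sum_range_succ, add_mul, ih]; push_cast; ring

lemma geom_sum_eq_zero_of_pow_eq_one {ω : ℂ} {n : ℕ} (h1 : ω ^ n = 1) (h : ω ≠ 1) :
    ∑ j ∈ range n, ω ^ j = 0 := by
  rw [geom_sum_eq h, h1, sub_self, zero_div]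

/-- Parseval's identity on `ℤ/n` for the function `j ↦ j`. -/
lemma parseval_id (n : ℕ) (hn : 0 < n) {ζ : ℂ} (hζ : IsPrimitiveRoot ζ n) :
    ∑ k ∈ range n, ‖∑ j ∈ range n, (j : ℂ) * (ζ ^ k) ^ j‖ ^ 2 =
      n * ∑ j ∈ range n, (j : ℝ) ^ 2 := by
  have hnorm : ‖ζ‖ = 1 := hζ.norm'_eq_one hn.ne'
  have hinv : ζ * starRingEnd ℂ ζ = 1 := by
    rw [Complex.mul_conj, Complex.normSq_eq_norm_sq, hnorm]; simp
  have hconj : (starRingEnd ℂ ζ) ^ n = 1 := by rw [← map_pow, hζ.pow_eq_one, map_one]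
  have horth : ∀ j ∈ range n, ∀ l ∈ range n,
      ∑ k ∈ range n, (ζ ^ j * (starRingEnd ℂ ζ) ^ l) ^ k = if j = l then (n : ℂ) else 0 := by
    intro j hj l hl
    split_ifs with h
    · subst h
      rw [← mul_pow, hinv]; simp
    · apply geom_sum_eq_zero_of_pow_eq_one
      · rw [mul_pow, ← pow_mul, ← pow_mul, mul_comm j, mul_comm l, pow_mul, pow_mul,
          hζ.pow_eq_one, hconj]; simp
      · intro h1
        apply h
        apply hζ.pow_inj (mem_range.1 hj) (mem_range.1 hl)
        calc ζ ^ j = ζ ^ j * (ζ * starRingEnd ℂ ζ) ^ l := by rw [hinv]; simp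
          _ = (ζ ^ j * (starRingEnd ℂ ζ) ^ l) * ζ ^ l := by rw [mul_pow]; ring
          _ = ζ ^ l := by rw [h1, one_mul]
  apply Complex.ofReal_injective
  push_cast
  calc ∑ k ∈ range n, ((‖∑ j ∈ range n, (j : ℂ) * (ζ ^ k) ^ j‖ : ℝ) : ℂ) ^ 2
      = ∑ k ∈ range n, ∑ j ∈ range n, ∑ l ∈ range n,
          (j : ℂ) * l * (ζ ^ j * (starRingEnd ℂ ζ) ^ l) ^ k := by
        refine sum_congr rfl fun k _ => ?_
        rw [← Complex.mul_conj', map_sum, sum_mul_sum]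
        refine sum_congr rfl fun j _ => sum_congr rfl fun l _ => ?_
        simp only [map_mul, map_pow, map_natCast]
        ring
    _ = ∑ j ∈ range n, ∑ l ∈ range n, (j : ℂ) * l *
          ∑ k ∈ range n, (ζ ^ j * (starRingEnd ℂ ζ) ^ l) ^ k := by
        rw [sum_comm]
        refine sum_congr rfl fun j _ => ?_
        rw [sum_comm]
        refine sum_congr rfl fun l _ => ?_
        rw [mul_sum]
    _ = ∑ j ∈ range n, ∑ l ∈ range n, (j : ℂ) * l * (if j = l then (n : ℂ) else 0) :=
        sum_congr rfl fun j hj => sum_congr rfl fun l hl => by rw [horth j hj l hl]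
    _ = n * ∑ j ∈ range n, (j : ℂ) ^ 2 := by
        rw [mul_sum]
        refine sum_congr rfl fun j hj => ?_
        simp only [mul_ite, mul_zero, sum_ite_eq, hj, if_true]
        ring

lemma sum_range_cast (n : ℕ) : ∑ j ∈ range n, (j : ℝ) = n * (n - 1) / 2 := by
  induction n with
  | zero => simp
  | succ m ih => rw [sum_range_succ, ih]; push_cast; ring

lemma sum_range_cast_sq (n : ℕ) :
    ∑ j ∈ range n, (j : ℝ) ^ 2 = n * (n - 1) * (2 * n - 1) / 6 := by
  induction n with
  | zero => simp
  | succ m ih => rw [sum_range_succ, ih]; push_cast; ring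

/-- The term `k = 0` is `1 / 0 = 0`. -/
lemma sum_inv_sin_sq (n : ℕ) (hn : 0 < n) :
    ∑ k ∈ range n, 1 / Real.sin (Real.pi * k / n) ^ 2 = ((n : ℝ) ^ 2 - 1) / 3 := by
  have hn' : (0 : ℝ) < n := by exact_mod_cast hn
  have hζ := Complex.isPrimitiveRoot_exp n hn.ne'
  set ζ := Complex.exp (2 * Real.pi * Complex.I / n) with hζdef
  have hP := parseval_id n hn hζ
  -- For `k ≠ 0` the Fourier coefficient of `j ↦ j` at `k` is `n / (ζ^k - 1)`.
  have hterm : ∀ k ∈ (range n).erase 0, 1 / Real.sin (Real.pi * k / n) ^ 2 =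
      4 / (n : ℝ) ^ 2 * ‖∑ j ∈ range n, (j : ℂ) * (ζ ^ k) ^ j‖ ^ 2 := by
    intro k hk
    obtain ⟨hk0, hkn⟩ := mem_erase.1 hk
    rw [mem_range] at hkn
    have hpos : 0 < Real.sin (Real.pi * k / n) :=
      (by positivity : (0 : ℝ) < 2 / n).trans_le
        (two_div_le_sin n k (Nat.pos_of_ne_zero hk0) hkn)
    have h1 : (ζ ^ k) ^ n = 1 := by rw [← pow_mul, mul_comm, pow_mul, hζ.pow_eq_one, one_pow]
    have hne : ζ ^ k ≠ 1 := hζ.pow_ne_one_of_pos_of_lt hk0 hkn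
    have h2 := congrArg norm (sum_mul_pow_mul_sub_one (ζ ^ k) n)
    rw [h1, geom_sum_eq_zero_of_pow_eq_one h1 hne, mul_zero, sub_zero, mul_one, norm_mul,
      Complex.norm_natCast, hζdef, norm_zeta_pow_sub_one, ← hζdef, abs_of_pos (by positivity)]
      at h2
    rw [div_mul_eq_mul_div, div_eq_div_iff (by positivity) (by positivity)]
    linear_combination (-(n : ℝ) - ‖∑ j ∈ range n, (j : ℂ) * (ζ ^ k) ^ j‖ *
      (2 * Real.sin (Real.pi * k / n))) * h2
  have h0 : (0 : ℕ) ∈ range n := mem_range.2 hn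
  have hS0 : ‖∑ j ∈ range n, (j : ℂ) * (ζ ^ 0) ^ j‖ = n * (n - 1) / 2 := by
    have : ∑ j ∈ range n, (j : ℂ) * (ζ ^ 0) ^ j = ((∑ j ∈ range n, (j : ℝ) : ℝ) : ℂ) := by
      push_cast; simp
    rw [this, Complex.norm_real, Real.norm_eq_abs, abs_of_nonneg (by positivity), sum_range_cast]
  rw [← add_sum_erase _ _ h0, hS0, sum_range_cast_sq] at hP
  rw [← add_sum_erase _ _ h0, sum_congr rfl hterm, ← mul_sum]
  have hP' := eq_sub_of_add_eq' hP
  rw [hP']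
  simp
  field_simp
  ring

/-! ### Periodic functions of index differences -/

/-- `μ ↦ μ - ν` runs through all residues modulo `n`, for each `ν`. -/
lemma sum_sub_right_of_periodic (n : ℕ) (g : ℤ → ℝ) (hg : Function.Periodic g n) (ν : Fin n) :
    ∑ μ : Fin n, g ((μ : ℤ) - (ν : ℤ)) = ∑ k ∈ range n, g k := by
  have : NeZero n := ⟨by have := ν.isLt; omega⟩
  rw [← Fin.sum_univ_eq_sum_range (fun k => g (k : ℤ)) n]
  refine Fintype.sum_equiv (Equiv.subRight ν) _ _ fun μ => ?_
  simp only [Equiv.subRight_apply]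
  rw [Fin.coe_int_sub_eq_ite]
  split_ifs
  · rfl
  · rw [hg]

lemma sum_odd_periodic_eq_zero (n : ℕ) (g : ℤ → ℝ) (hg : Function.Periodic g n)
    (hodd : ∀ k, g (-k) = - g k) : ∑ k ∈ range n, g k = 0 := by
  rcases n.eq_zero_or_pos with rfl | hn
  · simp
  obtain ⟨m, rfl⟩ : ∃ m, n = m + 1 := ⟨n - 1, by omega⟩
  have h0 : g 0 = 0 := by have := hodd 0; simp at this; linarith
  rw [sum_range_succ']
  have h := sum_range_reflect (fun k : ℕ => g ((k + 1 : ℕ) : ℤ)) m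
  have h' : ∑ j ∈ range m, g ((m - 1 - j + 1 : ℕ) : ℤ) =
      - ∑ j ∈ range m, g ((j + 1 : ℕ) : ℤ) := by
    rw [← sum_neg_distrib]
    refine sum_congr rfl fun j hj => ?_
    have := mem_range.1 hj
    rw [← hodd, ← hg (-((j + 1 : ℕ) : ℤ))]
    congr 1
    push_cast
    omega
  simp only [Nat.cast_zero, h0]
  linarith

/-- Lower bound near the Fekete configuration: if `θ_μ = 2πμ/n + σ + t_μ` with `∑ t_μ = 0` and
`max |t_μ| ≤ 1/n`, then `∑_{μ≠ν} log|e^{iθ_μ} - e^{iθ_ν}| ≥ n log n - (4/3)(n - 1/n)`. -/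
theorem log_energy_lower_bound (n : ℕ) (hn : 2 ≤ n) (σ : ℝ) (t : Fin n → ℝ)
    (hsum : ∑ μ, t μ = 0) (hmax : ∀ μ, |t μ| ≤ 1 / n)
    (θ : Fin n → ℝ) (hθ : ∀ μ, θ μ = 2 * Real.pi * ((μ : ℝ) + 1) / n + σ + t μ) :
    (n : ℝ) * Real.log n - (4 / 3) * ((n : ℝ) - 1 / n) ≤
      ∑ p ∈ Finset.univ.filter (fun p : Fin n × Fin n => p.1 ≠ p.2),
        Real.log ‖Complex.exp (Complex.I * (θ p.1 : ℂ)) -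
          Complex.exp (Complex.I * (θ p.2 : ℂ))‖ := by
  have hn0 : 0 < n := by omega
  have hn' : (0 : ℝ) < n := by exact_mod_cast hn0
  -- The diagonal terms are `log 0 = 0`.
  have hfull : ∑ p ∈ Finset.univ.filter (fun p : Fin n × Fin n => p.1 ≠ p.2),
        Real.log ‖Complex.exp (Complex.I * (θ p.1 : ℂ)) - Complex.exp (Complex.I * (θ p.2 : ℂ))‖ =
      ∑ μ, ∑ ν, Real.log ‖Complex.exp (Complex.I * (θ μ : ℂ)) -
        Complex.exp (Complex.I * (θ ν : ℂ))‖ := by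
    rw [sum_filter, ← univ_product_univ, sum_product]
    refine sum_congr rfl fun μ _ => sum_congr rfl fun ν _ => ?_
    by_cases h : μ = ν <;> simp [h]
  rw [hfull]
  have hnorm : ∀ a b : ℝ, ‖Complex.exp (Complex.I * (a : ℂ)) - Complex.exp (Complex.I * (b : ℂ))‖ =
      |2 * Real.sin ((a - b) / 2)| := by
    intro a b
    rw [← Real.norm_eq_abs, ← Complex.norm_exp_I_mul_ofReal_sub_one]
    have : Complex.exp (Complex.I * (a : ℂ)) - Complex.exp (Complex.I * (b : ℂ)) =
        Complex.exp (Complex.I * (b : ℂ)) *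
          (Complex.exp (Complex.I * ((a - b : ℝ) : ℂ)) - 1) := by
      rw [mul_sub, ← Complex.exp_add, mul_one]
      congr 2
      push_cast; ring
    rw [this, norm_mul, mul_comm Complex.I (b : ℂ), Complex.norm_exp_ofReal_mul_I, one_mul]
  have hshift : ∀ k : ℤ, Real.pi * ((k + n : ℤ) : ℝ) / n = Real.pi * k / n + Real.pi := by
    intro k; push_cast; field_simp
  let L : ℤ → ℝ := fun k => Real.log |2 * Real.sin (Real.pi * k / n)|
  let C : ℤ → ℝ := fun k => Real.cot (Real.pi * k / n)
  let Q : ℤ → ℝ := fun k => 1 / Real.sin (Real.pi * k / n) ^ 2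
  have hL : Function.Periodic L n := by
    intro k; simp only [L]; rw [hshift, Real.sin_add_pi, mul_neg, abs_neg]
  have hC : Function.Periodic C n := by
    intro k; simp only [C]
    rw [hshift, Real.cot_eq_cos_div_sin, Real.sin_add_pi, Real.cos_add_pi, neg_div_neg_eq,
      ← Real.cot_eq_cos_div_sin]
  have hQ : Function.Periodic Q n := by
    intro k; simp only [Q]; rw [hshift, Real.sin_add_pi, neg_sq]
  have hCodd : ∀ k, C (-k) = - C k := by
    intro k; simp only [C]
    rw [Int.cast_neg, mul_neg, neg_div, Real.cot_eq_cos_div_sin, Real.sin_neg, Real.cos_neg,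
      div_neg, ← Real.cot_eq_cos_div_sin]
  have hCzero := sum_odd_periodic_eq_zero n C hC hCodd
  have hLsum : ∑ k ∈ range n, L k = Real.log n := by
    simpa [L] using sum_log_two_sin n hn0
  have hQsum : ∑ k ∈ range n, Q k = ((n : ℝ) ^ 2 - 1) / 3 := by
    simpa [Q] using sum_inv_sin_sq n hn0
  have hpt : ∀ μ ν : Fin n, L ((μ : ℤ) - ν) + (t μ - t ν) / 2 * C ((μ : ℤ) - ν)
      - 4 / (n : ℝ) ^ 2 * Q ((μ : ℤ) - ν) ≤
      Real.log ‖Complex.exp (Complex.I * (θ μ : ℂ)) - Complex.exp (Complex.I * (θ ν : ℂ))‖ := by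
    intro μ ν
    by_cases h : μ = ν
    · subst h; simp [L, C, Q]
    have hs : |(t μ - t ν) / 2| ≤ 1 / n := by
      have h1 := abs_le.1 (hmax μ)
      have h2 := abs_le.1 (hmax ν)
      rw [abs_le]; constructor <;> linarith [h1.1, h1.2, h2.1, h2.2]
    have hsin : 2 / (n : ℝ) ≤ |Real.sin (Real.pi * (((μ : ℤ) - ν : ℤ) : ℝ) / n)| := by
      rcases lt_or_gt_of_ne h with h | h
      · have := two_div_le_sin n (ν - μ : ℕ) (by omega) (by omega)
        rw [Nat.cast_sub (by omega)] at this
        rw [← abs_neg, ← Real.sin_neg]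
        refine le_trans (this.trans_eq ?_) (le_abs_self _)
        congr 1; push_cast; ring
      · have := two_div_le_sin n (μ - ν : ℕ) (by omega) (by omega)
        rw [Nat.cast_sub (by omega)] at this
        refine le_trans (this.trans_eq ?_) (le_abs_self _)
        congr 1; push_cast; ring
    have h2n : (0 : ℝ) < 2 / n := by positivity
    have key := log_two_sin_add_ge (x := Real.pi * (((μ : ℤ) - ν : ℤ) : ℝ) / n)
      (s := (t μ - t ν) / 2) (abs_pos.1 (h2n.trans_le hsin))
      (by rw [show (2 : ℝ) / n = 2 * (1 / n) by ring] at hsin; linarith)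
    have hssq : ((t μ - t ν) / 2) ^ 2 ≤ 1 / (n : ℝ) ^ 2 := by
      rw [← sq_abs, ← one_div_pow]
      exact pow_le_pow_left₀ (abs_nonneg _) hs 2
    have hQnn : 0 ≤ Q ((μ : ℤ) - ν) := by simp only [Q]; positivity
    have harg : (θ μ - θ ν) / 2 =
        Real.pi * (((μ : ℤ) - ν : ℤ) : ℝ) / n + (t μ - t ν) / 2 := by
      rw [hθ, hθ]; push_cast; ring
    rw [hnorm, harg]
    refine le_trans ?_ key
    have : 4 * ((t μ - t ν) / 2) ^ 2 * Q ((μ : ℤ) - ν) ≤ 4 / (n : ℝ) ^ 2 * Q ((μ : ℤ) - ν) := by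
      refine mul_le_mul_of_nonneg_right ?_ hQnn
      rw [show (4 : ℝ) / (n : ℝ) ^ 2 = 4 * (1 / (n : ℝ) ^ 2) by ring]
      linarith
    simp only [L, C, Q] at this ⊢
    linarith
  refine le_trans (le_of_eq ?_) (sum_le_sum fun μ _ => sum_le_sum fun ν _ => hpt μ ν)
  -- Column sums vanish by periodicity and oddness; row sums are their negatives.
  have hcol : ∀ ν : Fin n, ∑ μ : Fin n, C ((μ : ℤ) - ν) = 0 := fun ν => by
    rw [sum_sub_right_of_periodic n C hC, hCzero]
  have hrow : ∀ μ : Fin n, ∑ ν : Fin n, C ((μ : ℤ) - ν) = 0 := fun μ => by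
    have : ∀ ν : Fin n, C ((μ : ℤ) - ν) = - C ((ν : ℤ) - μ) := fun ν => by
      rw [← hCodd, neg_sub]
    rw [sum_congr rfl fun ν _ => this ν, sum_neg_distrib, hcol, neg_zero]
  have hlin : ∑ μ : Fin n, ∑ ν : Fin n, (t μ - t ν) / 2 * C ((μ : ℤ) - ν) = 0 := by
    have h1 : ∑ μ : Fin n, ∑ ν : Fin n, t μ / 2 * C ((μ : ℤ) - ν) = 0 :=
      sum_eq_zero fun μ _ => by rw [← mul_sum, hrow, mul_zero]
    have h2 : ∑ μ : Fin n, ∑ ν : Fin n, t ν / 2 * C ((μ : ℤ) - ν) = 0 := by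
      rw [sum_comm]
      exact sum_eq_zero fun ν _ => by rw [← mul_sum, hcol, mul_zero]
    simp only [sub_div, sub_mul, sum_sub_distrib, h1, h2, sub_zero]
  have htot : ∀ g : ℤ → ℝ, Function.Periodic g n →
      ∑ μ : Fin n, ∑ ν : Fin n, g ((μ : ℤ) - ν) = n * ∑ k ∈ range n, g k := by
    intro g hg
    rw [sum_comm, sum_congr rfl fun ν _ => sum_sub_right_of_periodic n g hg ν]
    simp
  simp only [sum_sub_distrib, sum_add_distrib, ← mul_sum]
  rw [hlin, htot L hL, htot Q hQ, hLsum, hQsum]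
  field_simp
  ring
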